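/- arXiv:1312.7819 — 2 statements merged into one kernel-verified Lean document; each statement's English description precedes it below -/
import Mathlib

section
/- Let b > 0, let B = B(0,b) be the open ball of radius b centered at 0 in ℝ³, and let M = ℝ³ \ B. Let u : ℝ³ → ℝ be continuously differentiable with compact support, and let α ≥ 1. Define u_α on B \ {0} by u_α(x) = u(b^{α+1}·|x|^{−α−1}·x) (in spherical coordinates, u_α(r,θ,φ) = u(b^{α+1} r^{−α}, θ, φ)); since u has compact support, u_α vanishes in a punctured neighborhood of 0 and extends by 0 to a continuously differentiable function on B. Then ∫_B |∇u_α|² dx ≤ α · ∫_M |∇u|² dx. -/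
open MeasureTheory Metric Real Classical

noncomputable section

abbrev E3 := EuclideanSpace ℝ (Fin 3)

/-!
The map `T x = b ^ (α + 1) |x| ^ (-α - 1) x` carries the punctured ball injectively into the
exterior of the ball. Its derivative at `x` is `λ = (b / |x|) ^ (α + 1) ≥ 1` times the linear map
which multiplies the radial direction by `-α` and fixes the tangential ones, so
`‖DT‖ ≤ λ max(1, α)` and `|det DT| = α λ ^ n`. Hence `‖DT‖ ^ p ≤ (max(1, α) ^ p / α) |det DT|`
whenever `p ≤ n`, and the chain rule and the change of variables formula bound the `p`-energy of
`u ∘ T` on the ball by this constant times the `p`-energy of `u` outside.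
-/

open Set Module

theorem integrable_norm_fderiv_rpow_of_hasCompactSupport {E F : Type*} [NormedAddCommGroup E]
    [NormedSpace ℝ E] [MeasurableSpace E] [OpensMeasurableSpace E] {μ : Measure E}
    [IsFiniteMeasureOnCompacts μ] [NormedAddCommGroup F] [NormedSpace ℝ F] {u : E → F} {p : ℝ}
    (hp : 0 < p) (hu : ContDiff ℝ 1 u) (husupp : HasCompactSupport u) :
    Integrable (fun x => ‖fderiv ℝ u x‖ ^ p) μ :=
  have hcont : Continuous fun x => ‖fderiv ℝ u x‖ ^ p :=
    (hu.continuous_fderiv one_ne_zero).norm.rpow_const fun _ => .inr hp.le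
  hcont.integrable_of_hasCompactSupport
    ((husupp.fderiv ℝ).comp_left (g := fun L : E →L[ℝ] F => ‖L‖ ^ p) (by simp [hp.ne']))

theorem setIntegral_norm_fderiv_comp_rpow_le {E F : Type*} [NormedAddCommGroup E]
    [NormedSpace ℝ E] [FiniteDimensional ℝ E] [MeasurableSpace E] [BorelSpace E] (μ : Measure E)
    [μ.IsAddHaarMeasure] [NormedAddCommGroup F] [NormedSpace ℝ F] {f : E → E}
    {f' : E → E →L[ℝ] E} {u : E → F} {s : Set E} {p K : ℝ} (hs : MeasurableSet s)
    (hf : ∀ x ∈ s, HasFDerivAt f (f' x) x) (hinj : InjOn f s) (hp : 0 ≤ p)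
    (hK : ∀ x ∈ s, ‖f' x‖ ^ p ≤ K * |(f' x).det|)
    (hu : ∀ x ∈ s, DifferentiableAt ℝ u (f x))
    (hint : IntegrableOn (fun y => ‖fderiv ℝ u y‖ ^ p) (f '' s) μ) :
    ∫ x in s, ‖fderiv ℝ (u ∘ f) x‖ ^ p ∂μ ≤ K * ∫ y in f '' s, ‖fderiv ℝ u y‖ ^ p ∂μ := by
  have hfs : ∀ x ∈ s, HasFDerivWithinAt f (f' x) s x := fun x hx => (hf x hx).hasFDerivWithinAt
  have pointwise : ∀ x ∈ s,
      ‖fderiv ℝ (u ∘ f) x‖ ^ p ≤ K * (|(f' x).det| • ‖fderiv ℝ u (f x)‖ ^ p) := fun x hx =>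
    calc ‖fderiv ℝ (u ∘ f) x‖ ^ p
        = ‖(fderiv ℝ u (f x)).comp (f' x)‖ ^ p := by
          rw [((hu x hx).hasFDerivAt.comp x (hf x hx)).fderiv]
      _ ≤ (‖fderiv ℝ u (f x)‖ * ‖f' x‖) ^ p := by
          gcongr
          exact ContinuousLinearMap.opNorm_comp_le _ _
      _ = ‖f' x‖ ^ p * ‖fderiv ℝ u (f x)‖ ^ p := by
          rw [mul_rpow (norm_nonneg _) (norm_nonneg _), mul_comm]
      _ ≤ K * |(f' x).det| * ‖fderiv ℝ u (f x)‖ ^ p := by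
          gcongr
          exact hK x hx
      _ = K * (|(f' x).det| • ‖fderiv ℝ u (f x)‖ ^ p) := by rw [smul_eq_mul, mul_assoc]
  rw [integral_image_eq_integral_abs_det_fderiv_smul μ hs hfs hinj, ← integral_const_mul]
  rw [integrableOn_image_iff_integrableOn_abs_det_fderiv_smul μ hs hfs hinj] at hint
  exact integral_mono_of_nonneg (.of_forall fun x => by positivity) (hint.const_mul K)
    (ae_restrict_of_forall_mem hs pointwise)

section ReflectionFactor

variable {E : Type*} [NormedAddCommGroup E] {b α : ℝ} {x : E}

/-- The factor by which `radialReflection b α` multiplies the vector `x`. It equals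
`(b / ‖x‖) ^ (α + 1)` and is also the factor by which tangential lengths at `x` are scaled. -/
def reflectionFactor (b α : ℝ) (x : E) : ℝ := b ^ (α + 1) * ‖x‖ ^ (-(α + 1))

theorem reflectionFactor_eq_div_rpow (hb : 0 ≤ b) (α : ℝ) (x : E) :
    reflectionFactor b α x = (b / ‖x‖) ^ (α + 1) := by
  rw [reflectionFactor, div_rpow hb (norm_nonneg x), rpow_neg (norm_nonneg x), div_eq_mul_inv]

theorem reflectionFactor_pos (hb : 0 < b) (α : ℝ) (hx : x ≠ 0) : 0 < reflectionFactor b α x := by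
  have := norm_pos_iff.2 hx
  unfold reflectionFactor
  positivity

theorem one_le_reflectionFactor (hα : -1 ≤ α) (hx : x ≠ 0) (hxb : ‖x‖ ≤ b) :
    1 ≤ reflectionFactor b α x := by
  rw [reflectionFactor_eq_div_rpow ((norm_nonneg x).trans hxb)]
  exact one_le_rpow ((one_le_div (norm_pos_iff.2 hx)).2 hxb) (by linarith)

end ReflectionFactor

section RadialReflection

variable {E : Type*} [NormedAddCommGroup E] [InnerProductSpace ℝ E] {b α : ℝ} {x : E}

/-- The linear map which multiplies the direction of `x` by `c` and fixes the orthogonal complement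
of `x`. Up to a scalar, it is the derivative at `x` of a radial power map `y ↦ ‖y‖ ^ q • y`. For
`x = 0` it is the identity. -/
def radialStretch (c : ℝ) (x : E) : E →L[ℝ] E :=
  ContinuousLinearMap.id ℝ E + (((c - 1) / ‖x‖ ^ 2) • innerSL ℝ x).smulRight x

theorem radialStretch_apply (c : ℝ) (x h : E) :
    radialStretch c x h = h + ((c - 1) / ‖x‖ ^ 2 * inner ℝ x h) • x := by
  simp [radialStretch]

theorem det_radialStretch [FiniteDimensional ℝ E] (c : ℝ) (hx : x ≠ 0) :
    (radialStretch c x).det = c := by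
  have eq_transvection : (radialStretch c x : E →ₗ[ℝ] E) =
      LinearMap.transvection (((c - 1) / ‖x‖ ^ 2) • (innerSL ℝ x : E →ₗ[ℝ] ℝ)) x := by
    ext h
    simp [radialStretch_apply, LinearMap.transvection.apply]
  rw [ContinuousLinearMap.det, eq_transvection, LinearMap.transvection.det]
  have := norm_ne_zero_iff.2 hx
  simp [field]

theorem norm_radialStretch_apply_sq (c : ℝ) (hx : x ≠ 0) (h : E) :
    ‖radialStretch c x h‖ ^ 2 =
      (‖h‖ ^ 2 - (inner ℝ x h / ‖x‖) ^ 2) + c ^ 2 * (inner ℝ x h / ‖x‖) ^ 2 := by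
  have := norm_ne_zero_iff.2 hx
  rw [radialStretch_apply, norm_add_sq_real, norm_smul, inner_smul_right, real_inner_comm x h,
    mul_pow, Real.norm_eq_abs, sq_abs]
  field_simp
  ring

theorem norm_radialStretch_le (c : ℝ) (hx : x ≠ 0) : ‖radialStretch c x‖ ≤ max 1 |c| := by
  refine ContinuousLinearMap.opNorm_le_bound _ (by positivity) fun h => ?_
  have radial_le : (inner ℝ x h / ‖x‖) ^ 2 ≤ ‖h‖ ^ 2 := by
    rw [sq_le_sq, abs_norm, abs_div, abs_norm, div_le_iff₀' (norm_pos_iff.2 hx)]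
    exact abs_real_inner_le_norm x h
  have one_le : 1 ≤ max 1 |c| ^ 2 := one_le_pow₀ (le_max_left _ _)
  have sq_le : c ^ 2 ≤ max 1 |c| ^ 2 := by
    rw [← sq_abs c]
    gcongr
    exact le_max_right _ _
  rw [← sq_le_sq₀ (norm_nonneg _) (by positivity), mul_pow, norm_radialStretch_apply_sq c hx]
  calc (‖h‖ ^ 2 - (inner ℝ x h / ‖x‖) ^ 2) + c ^ 2 * (inner ℝ x h / ‖x‖) ^ 2
      ≤ max 1 |c| ^ 2 * (‖h‖ ^ 2 - (inner ℝ x h / ‖x‖) ^ 2)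
          + max 1 |c| ^ 2 * (inner ℝ x h / ‖x‖) ^ 2 := by
        gcongr
        exact le_mul_of_one_le_left (sub_nonneg.2 radial_le) one_le
    _ = max 1 |c| ^ 2 * ‖h‖ ^ 2 := by ring

theorem hasFDerivAt_norm_rpow_of_ne_zero (q : ℝ) (hx : x ≠ 0) :
    HasFDerivAt (fun y : E => ‖y‖ ^ q) ((q * ‖x‖ ^ (q - 2)) • innerSL ℝ x) x := by
  have rpow_sq : ∀ (y : E) (r : ℝ), (‖y‖ ^ 2) ^ r = ‖y‖ ^ (2 * r) := fun y r => by
    rw [← rpow_natCast_mul (norm_nonneg y), Nat.cast_ofNat]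
  have h := (hasStrictFDerivAt_norm_sq x).hasFDerivAt.rpow_const (p := q / 2)
    (.inl (pow_ne_zero 2 (norm_ne_zero_iff.2 hx)))
  simp only [rpow_sq, mul_div_cancel₀ q (two_ne_zero' ℝ), mul_sub, mul_one] at h
  convert! h using 1
  rw [← Nat.cast_smul_eq_nsmul ℝ, smul_smul]
  congr 1
  push_cast
  ring

theorem hasFDerivAt_norm_rpow_smul_self (q : ℝ) (hx : x ≠ 0) :
    HasFDerivAt (fun y : E => ‖y‖ ^ q • y) (‖x‖ ^ q • radialStretch (q + 1) x) x := by
  convert! (hasFDerivAt_norm_rpow_of_ne_zero q hx).smul (hasFDerivAt_id x) using 1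
  ext h
  have rpow_sub_two : ‖x‖ ^ (q - 2) = ‖x‖ ^ q / ‖x‖ ^ 2 := by
    exact_mod_cast rpow_sub_natCast (norm_ne_zero_iff.2 hx) q 2
  simp [radialStretch_apply, smul_smul, rpow_sub_two]
  ring_nf

/-- The reflection `r ↦ b ^ (α + 1) * r ^ (-α)` of the radial coordinate across the sphere of
radius `b` about `0`, with the direction kept. For `α = 1` it is the inversion in that sphere. The
origin is sent to itself. -/
def radialReflection (b α : ℝ) (x : E) : E := reflectionFactor b α x • x

theorem norm_radialReflection (hb : 0 < b) (α : ℝ) (hx : x ≠ 0) :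
    ‖radialReflection b α x‖ = (b / ‖x‖) ^ α * b := by
  have := norm_pos_iff.2 hx
  rw [radialReflection, norm_smul, norm_of_nonneg (reflectionFactor_pos hb α hx).le,
    reflectionFactor_eq_div_rpow hb.le, rpow_add_one (by positivity)]
  field_simp

theorem mapsTo_radialReflection (hα : 0 < α) :
    MapsTo (radialReflection b α : E → E) (ball 0 b \ {0}) (closedBall 0 b)ᶜ := by
  rintro x ⟨hxb, hx⟩
  rw [mem_ball_zero_iff] at hxb
  have hb : 0 < b := (norm_nonneg x).trans_lt hxb
  rw [mem_compl_iff, mem_closedBall_zero_iff, not_le, norm_radialReflection hb α hx]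
  exact lt_mul_of_one_lt_left hb (one_lt_rpow ((one_lt_div (norm_pos_iff.2 hx)).2 hxb) hα)

theorem injOn_radialReflection (hb : 0 < b) (hα : α ≠ 0) :
    InjOn (radialReflection b α : E → E) {0}ᶜ := by
  intro x hx y hy hxy
  have norm_eq : (b / ‖x‖) ^ α * b = (b / ‖y‖) ^ α * b := by
    rw [← norm_radialReflection hb α hx, ← norm_radialReflection hb α hy, hxy]
  have ratio_eq : b / ‖x‖ = b / ‖y‖ :=
    (rpow_left_inj (by positivity) (by positivity) hα).1 (mul_right_cancel₀ hb.ne' norm_eq)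
  have factor_eq : reflectionFactor b α x = reflectionFactor b α y := by
    simp only [reflectionFactor_eq_div_rpow hb.le, ratio_eq]
  rw [radialReflection, radialReflection, factor_eq] at hxy
  exact smul_right_injective E (reflectionFactor_pos hb α hy).ne' hxy

theorem hasFDerivAt_radialReflection (b α : ℝ) (hx : x ≠ 0) :
    HasFDerivAt (radialReflection b α) (reflectionFactor b α x • radialStretch (-α) x) x := by
  convert! (hasFDerivAt_norm_rpow_smul_self (-(α + 1)) hx).const_smul (b ^ (α + 1)) using 1
  · ext y
    simp only [radialReflection, reflectionFactor, mul_smul, Pi.smul_apply]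
  · rw [reflectionFactor, mul_smul]
    ring_nf

theorem norm_radialReflection_fderiv_rpow_le [FiniteDimensional ℝ E] {p : ℝ} (hα : 0 < α)
    (hp : 0 ≤ p) (hpE : p ≤ finrank ℝ E) (hx : x ≠ 0) (hxb : ‖x‖ ≤ b) :
    ‖reflectionFactor b α x • radialStretch (-α) x‖ ^ p ≤
      max 1 α ^ p / α * |(reflectionFactor b α x • radialStretch (-α) x).det| := by
  have one_le : 1 ≤ reflectionFactor b α x := one_le_reflectionFactor (by linarith) hx hxb
  have norm_le : ‖radialStretch (-α) x‖ ≤ max 1 α := by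
    simpa [abs_of_pos hα] using norm_radialStretch_le (-α) hx
  have det_eq : (reflectionFactor b α x • radialStretch (-α) x).det =
      reflectionFactor b α x ^ finrank ℝ E * -α := by
    rw [ContinuousLinearMap.det, ContinuousLinearMap.toLinearMap_smul, LinearMap.det_smul]
    exact congrArg _ (det_radialStretch (-α) hx)
  generalize reflectionFactor b α x = t at *
  have t_pos : 0 < t := one_pos.trans_le one_le
  calc ‖t • radialStretch (-α) x‖ ^ p
      = t ^ p * ‖radialStretch (-α) x‖ ^ p := by
        rw [norm_smul, norm_of_nonneg t_pos.le, mul_rpow t_pos.le (norm_nonneg _)]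
    _ ≤ t ^ (finrank ℝ E : ℝ) * max 1 α ^ p := by gcongr
    _ = max 1 α ^ p / α * |(t • radialStretch (-α) x).det| := by
        rw [det_eq, abs_mul, abs_neg, abs_of_pos hα, abs_of_pos (pow_pos t_pos _), rpow_natCast]
        field_simp

end RadialReflection

theorem reflection_estimate_general {E F : Type*} [NormedAddCommGroup E] [InnerProductSpace ℝ E]
    [FiniteDimensional ℝ E] [MeasurableSpace E] [BorelSpace E] (μ : Measure E)
    [μ.IsAddHaarMeasure] [NormedAddCommGroup F] [NormedSpace ℝ F] {b α p : ℝ} (hb : 0 < b)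
    (hα : 0 < α) (hp : 0 < p) (hpE : p ≤ finrank ℝ E) {u v : E → F}
    (hu : DifferentiableOn ℝ u (closedBall 0 b)ᶜ)
    (hint : IntegrableOn (fun x => ‖fderiv ℝ u x‖ ^ p) (ball 0 b)ᶜ μ)
    (hv : EqOn v (u ∘ radialReflection b α) (ball 0 b \ {0})) :
    ∫ x in ball 0 b, ‖fderiv ℝ v x‖ ^ p ∂μ ≤
      max 1 α ^ p / α * ∫ x in (ball 0 b)ᶜ, ‖fderiv ℝ u x‖ ^ p ∂μ := by
  have : Nontrivial E := finrank_pos_iff.1 (Nat.cast_pos.1 (hp.trans_le hpE))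
  have punctured_ae_eq : ball (0 : E) b =ᵐ[μ] (ball 0 b \ {0} : Set E) :=
    (sdiff_null_ae_eq_self (measure_singleton 0)).symm
  have isOpen_punctured : IsOpen (ball (0 : E) b \ {0}) := isOpen_ball.sdiff isClosed_singleton
  have image_subset : radialReflection b α '' (ball 0 b \ {0}) ⊆ (ball (0 : E) b)ᶜ :=
    (mapsTo_radialReflection hα).image_subset.trans (compl_subset_compl.2 ball_subset_closedBall)
  calc ∫ x in ball 0 b, ‖fderiv ℝ v x‖ ^ p ∂μ
      = ∫ x in ball 0 b \ {0}, ‖fderiv ℝ (u ∘ radialReflection b α) x‖ ^ p ∂μ := by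
        rw [setIntegral_congr_set punctured_ae_eq]
        refine setIntegral_congr_fun isOpen_punctured.measurableSet fun x hx => ?_
        simp only [(hv.eventuallyEq_of_mem (isOpen_punctured.mem_nhds hx)).fderiv_eq]
    _ ≤ max 1 α ^ p / α *
          ∫ x in radialReflection b α '' (ball 0 b \ {0}), ‖fderiv ℝ u x‖ ^ p ∂μ :=
        setIntegral_norm_fderiv_comp_rpow_le μ isOpen_punctured.measurableSet
          (fun x hx => hasFDerivAt_radialReflection b α hx.2)
          ((injOn_radialReflection hb hα.ne').mono fun x hx => hx.2) hp.le
          (fun x hx => norm_radialReflection_fderiv_rpow_le hα hp.le hpE hx.2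
            (mem_ball_zero_iff.1 hx.1).le)
          (fun x hx => hu.differentiableAt
            (isClosed_closedBall.isOpen_compl.mem_nhds (mapsTo_radialReflection hα hx)))
          (hint.mono_set image_subset)
    _ ≤ max 1 α ^ p / α * ∫ x in (ball 0 b)ᶜ, ‖fderiv ℝ u x‖ ^ p ∂μ := by
        refine mul_le_mul_of_nonneg_left ?_ (by positivity)
        exact setIntegral_mono_set hint (.of_forall fun x => by positivity)
          image_subset.eventuallyLE

/-- **Reflection estimate** (Appendix, Lemma 5.1): for `b > 0`, `α ≥ 1` and a `C¹` compactly
supported `u : ℝ³ → ℝ`, the reflected function `u_α(x) = u(b^{α+1} |x|^{-α-1} x)` (extended by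
`0` at the origin) satisfies `∫_B |∇u_α|² ≤ α ∫_M |∇u|²`, where `B = B(0,b)` and
`M = ℝ³ \ B`. -/
theorem reflection_estimate
    (b : ℝ) (hb : 0 < b) (α : ℝ) (hα : 1 ≤ α)
    (u : E3 → ℝ) (hu : ContDiff ℝ 1 u) (husupp : HasCompactSupport u) :
    (∫ x in ball (0 : E3) b,
        ‖fderiv ℝ
          (fun y : E3 => if y = 0 then 0 else u ((b ^ (α + 1) * ‖y‖ ^ (-(α + 1))) • y)) x‖
          ^ (2 : ℝ)) ≤
      α * ∫ x in (ball (0 : E3) b)ᶜ, ‖fderiv ℝ u x‖ ^ (2 : ℝ) := by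
  refine (reflection_estimate_general volume hb (one_pos.trans_le hα) two_pos (by norm_num)
    (hu.differentiable one_ne_zero).differentiableOn
    (integrable_norm_fderiv_rpow_of_hasCompactSupport two_pos hu husupp).integrableOn
    fun y hy => if_neg hy.2).trans_eq ?_
  rw [max_eq_right hα, rpow_two, sq, mul_self_div_self]
end
end

section
/- Let b > 0, let B = B(0,b) be the open ball of radius b in ℝ³, and let M = ℝ³ \ B. Let u : ℝ³ → ℝ be continuously differentiable with compact support. Define ũ : ℝ³ → ℝ by ũ(x) = u(x) for |x| ≥ b, ũ(x) = 3u(b²·x/|x|²) − 2u(b³·x/|x|³) for 0 < |x| < b, and ũ(0) = 0. Then ũ is continuously differentiable on ℝ³ with compact support, ũ agrees with u on M, and ‖∇ũ‖_{L²(ℝ³)} ≤ 2(2+√2)·‖∇u‖_{L²(M)}. -/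
open MeasureTheory Metric Real Classical

noncomputable section

/-!
In dimension `d`, the map `Φₙ x = (b / ‖x‖) ^ n • x` sends the punctured ball of radius `b`
injectively into the exterior. Writing `P` for the orthogonal projection onto the line `ℝ ∙ x`, its
derivative at `x` is `(b / ‖x‖) ^ n • (1 - n P)`, of norm at most `(b / ‖x‖) ^ n (n - 1)` and
determinant `(b / ‖x‖) ^ (n d) (1 - n)`. On the sphere `‖x‖ = b` this derivative is `1 - n P`, and
`3 (1 - 2 P) - 2 (1 - 3 P) = 1`, so `3 u ∘ Φ₂ - 2 u ∘ Φ₃` matches `u` there to first order.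
Since `b / ‖x‖ ≥ 1` in the ball, for `p ≤ d` the change of variables along `Φₙ` bounds the `Lᵖ`
norm of `∇(u ∘ Φₙ)` on the ball by `(n - 1) ^ (1 - 1 / p)` times that of `∇u` on the exterior;
Minkowski's inequality then adds the contributions of the ball and of its exterior.
-/

open Filter Module Set Topology
open scoped ENNReal

section Gluing

variable {𝕜 E F : Type*} [NontriviallyNormedField 𝕜] [NormedAddCommGroup E] [NormedSpace 𝕜 E]
  [NormedAddCommGroup F] [NormedSpace 𝕜 F] {f g : E → F} {s U : Set E} {x : E}

lemma hasFDerivAt_piecewise (hf : DifferentiableAt 𝕜 f x) (hg : DifferentiableAt 𝕜 g x)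
    (h : x ∈ frontier s → f x = g x ∧ fderiv 𝕜 f x = fderiv 𝕜 g x) :
    HasFDerivAt (s.piecewise f g) (s.piecewise (fderiv 𝕜 f) (fderiv 𝕜 g) x) x := by
  by_cases hx : x ∈ frontier s
  · obtain ⟨hval, hder⟩ := h hx
    have hval' : s.piecewise f g x = f x := by simp [Set.piecewise, hval]
    have hder' : s.piecewise (fderiv 𝕜 f) (fderiv 𝕜 g) x = fderiv 𝕜 f x := by
      simp [Set.piecewise, hder]
    have hs : HasFDerivWithinAt (s.piecewise f g) (fderiv 𝕜 f x) s x :=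
      hf.hasFDerivAt.hasFDerivWithinAt.congr (s.piecewise_eqOn f g) hval'
    have hsc : HasFDerivWithinAt (s.piecewise f g) (fderiv 𝕜 f x) sᶜ x :=
      (hder ▸ hg.hasFDerivAt.hasFDerivWithinAt).congr (s.piecewise_eqOn_compl f g)
        (hval'.trans hval)
    simpa only [hder', union_compl_self, hasFDerivWithinAt_univ] using hs.union hsc
  · by_cases hxs : x ∈ s
    · have hs : s ∈ 𝓝 x := mem_interior_iff_mem_nhds.1 <|
        by_contra fun h' => hx ⟨subset_closure hxs, h'⟩
      rw [piecewise_eq_of_mem _ _ _ hxs]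
      exact hf.hasFDerivAt.congr_of_eventuallyEq ((s.piecewise_eqOn f g).eventuallyEq_of_mem hs)
    · have hs : sᶜ ∈ 𝓝 x := mem_interior_iff_mem_nhds.1 <| by
        rw [interior_compl]
        exact fun h' => hx ⟨h', fun h'' => hxs (interior_subset h'')⟩
      rw [piecewise_eq_of_notMem _ _ _ hxs]
      exact hg.hasFDerivAt.congr_of_eventuallyEq
        ((s.piecewise_eqOn_compl f g).eventuallyEq_of_mem hs)

lemma contDiffOn_one_piecewise (hU : IsOpen U) (hf : ContDiffOn 𝕜 1 f U) (hg : ContDiffOn 𝕜 1 g U)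
    (h : ∀ x ∈ U ∩ frontier s, f x = g x ∧ fderiv 𝕜 f x = fderiv 𝕜 g x) :
    ContDiffOn 𝕜 1 (s.piecewise f g) U := by
  have hderiv : ∀ x ∈ U, HasFDerivAt (s.piecewise f g)
      (s.piecewise (fderiv 𝕜 f) (fderiv 𝕜 g) x) x := fun x hx =>
    hasFDerivAt_piecewise ((hf.differentiableOn one_ne_zero).differentiableAt (hU.mem_nhds hx))
      ((hg.differentiableOn one_ne_zero).differentiableAt (hU.mem_nhds hx)) fun hxs => h x ⟨hx, hxs⟩
  have hcont : ContinuousOn (s.piecewise (fderiv 𝕜 f) (fderiv 𝕜 g)) U :=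
    ContinuousOn.piecewise (fun x hx => (h x hx).2)
      ((hf.continuousOn_fderiv_of_isOpen hU le_rfl).mono inter_subset_left)
      ((hg.continuousOn_fderiv_of_isOpen hU le_rfl).mono inter_subset_left)
  intro x hx
  exact (contDiffAt_one_iff.2 ⟨_, U, hU.mem_nhds hx, hcont, hderiv⟩).contDiffWithinAt

end Gluing

section LpNorm

variable {α E F : Type*} {m : MeasurableSpace α} {μ ν : Measure α}
  [NormedAddCommGroup E] [NormedAddCommGroup F]

lemma eLpNorm_le_add_restrict_compl {f : α → E} {p : ℝ≥0∞} {s : Set α} (hp : 1 ≤ p)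
    (hs : MeasurableSet s) (hf : AEStronglyMeasurable f μ) :
    eLpNorm f p μ ≤ eLpNorm f p (μ.restrict s) + eLpNorm f p (μ.restrict sᶜ) := by
  rw [← eLpNorm_indicator_eq_eLpNorm_restrict hs, ← eLpNorm_indicator_eq_eLpNorm_restrict hs.compl]
  simpa only [indicator_self_add_compl] using
    eLpNorm_add_le (hf.indicator hs) (hf.indicator hs.compl) hp

lemma eLpNorm_smul_sub_smul_le [NormedSpace ℝ E] {f g : α → E} {p : ℝ≥0∞} (hp : 1 ≤ p)
    (hf : AEStronglyMeasurable f μ) (hg : AEStronglyMeasurable g μ) (c d : ℝ) :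
    eLpNorm (c • f - d • g) p μ ≤ ‖c‖ₑ * eLpNorm f p μ + ‖d‖ₑ * eLpNorm g p μ := by
  rw [← eLpNorm_const_smul, ← eLpNorm_const_smul]
  exact eLpNorm_sub_le (hf.const_smul c) (hg.const_smul d) hp

lemma integral_rpow_norm_le_of_eLpNorm_le {f : α → E} {g : α → F} {p C : ℝ} (hp : 0 < p)
    (hC : 0 ≤ C) (hf : AEStronglyMeasurable f μ) (hg : MemLp g (ENNReal.ofReal p) ν)
    (h : eLpNorm f (ENNReal.ofReal p) μ ≤ ENNReal.ofReal C * eLpNorm g (ENNReal.ofReal p) ν) :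
    (∫ x, ‖f x‖ ^ p ∂μ) ^ (1 / p) ≤ C * (∫ x, ‖g x‖ ^ p ∂ν) ^ (1 / p) := by
  have hp₀ : ENNReal.ofReal p ≠ 0 := (ENNReal.ofReal_pos.2 hp).ne'
  have hle := ENNReal.toReal_mono (ENNReal.mul_ne_top ENNReal.ofReal_ne_top hg.eLpNorm_ne_top) h
  rw [ENNReal.toReal_mul, ENNReal.toReal_ofReal hC, toReal_eLpNorm hf,
    toReal_eLpNorm hg.aestronglyMeasurable,
    lpNorm_eq_integral_norm_rpow_toReal hp₀ ENNReal.ofReal_ne_top hf,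
    lpNorm_eq_integral_norm_rpow_toReal hp₀ ENNReal.ofReal_ne_top hg.aestronglyMeasurable] at hle
  simpa only [ENNReal.toReal_ofReal hp.le, one_div] using hle

end LpNorm

section InnerProductSpace

variable {E : Type*} [NormedAddCommGroup E] [InnerProductSpace ℝ E] {x : E}

lemma hasFDerivAt_norm (hx : x ≠ 0) : HasFDerivAt (‖·‖) (‖x‖⁻¹ • innerSL ℝ x) x := by
  have hx' : ‖x‖ ^ 2 ≠ 0 := pow_ne_zero _ (norm_ne_zero_iff.2 hx)
  have h := (hasStrictFDerivAt_norm_sq x).hasFDerivAt.sqrt hx'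
  simp only [Real.sqrt_sq (norm_nonneg _)] at h
  refine h.congr_fderiv (ContinuousLinearMap.ext fun v => ?_)
  simp only [one_div, mul_inv_rev, smul_apply, coe_innerSL_apply, nsmul_eq_mul, Nat.cast_ofNat,
    smul_eq_mul]
  field_simp

lemma norm_id_sub_smul_starProjection_le (K : Submodule ℝ E) [K.HasOrthogonalProjection] {c : ℝ}
    (hc : 2 ≤ c) : ‖ContinuousLinearMap.id ℝ E - c • K.starProjection‖ ≤ c - 1 := by
  have hsplit : ContinuousLinearMap.id ℝ E - c • K.starProjection =
      -(K.reflection : E →L[ℝ] E) - (c - 2) • K.starProjection := by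
    ext v
    simp only [sub_apply, ContinuousLinearMap.id_apply, smul_apply, neg_apply,
      ContinuousLinearEquiv.coe_coe, LinearIsometryEquiv.coe_toContinuousLinearEquiv,
      Submodule.reflection_apply, neg_sub]
    module
  have hrefl : ‖(K.reflection : E →L[ℝ] E)‖ ≤ 1 :=
    ContinuousLinearMap.opNorm_le_bound _ zero_le_one fun v => by simp
  calc ‖ContinuousLinearMap.id ℝ E - c • K.starProjection‖
      ≤ ‖(K.reflection : E →L[ℝ] E)‖ + ‖(c - 2) • K.starProjection‖ := by
        rw [hsplit]; exact (norm_sub_le _ _).trans_eq (by rw [norm_neg])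
    _ ≤ 1 + (c - 2) * 1 := by
        rw [norm_smul, Real.norm_of_nonneg (sub_nonneg.2 hc)]
        gcongr
        exact K.starProjection_norm_le
    _ = c - 1 := by ring

lemma det_id_sub_smul_starProjection_span_singleton [FiniteDimensional ℝ E] (c : ℝ) (hx : x ≠ 0) :
    (ContinuousLinearMap.id ℝ E - c • (ℝ ∙ x).starProjection).det = 1 - c := by
  have hx' : ‖x‖ ≠ 0 := norm_ne_zero_iff.2 hx
  have htransvection :
      ((ContinuousLinearMap.id ℝ E - c • (ℝ ∙ x).starProjection : E →L[ℝ] E) : E →ₗ[ℝ] E) =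
      LinearMap.transvection (innerSL ℝ x : E →ₗ[ℝ] ℝ) (-(c / ‖x‖ ^ 2) • x) := by
    ext v
    simp only [ContinuousLinearMap.toLinearMap_sub, ContinuousLinearMap.coe_id,
      ContinuousLinearMap.toLinearMap_smul, LinearMap.sub_apply, LinearMap.id_coe, id_eq,
      LinearMap.smul_apply, ContinuousLinearMap.coe_coe, Submodule.starProjection_singleton,
      ringHom_apply, LinearMap.transvection, ContinuousLinearMap.toLinearMap_innerSL_apply,
      innerₛₗ_apply_apply, neg_smul, smul_neg, LinearMap.coe_mk, AddHom.coe_mk]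
    module
  rw [ContinuousLinearMap.det, htransvection, LinearMap.transvection.det]
  simp only [ContinuousLinearMap.coe_coe, innerSL_apply_apply, real_inner_smul_right,
    real_inner_self_eq_norm_sq]
  field_simp
  ring

end InnerProductSpace

section ChangeOfVariables

variable {E F : Type*} [NormedAddCommGroup E] [NormedSpace ℝ E] [FiniteDimensional ℝ E]
  [MeasurableSpace E] [BorelSpace E] (μ : Measure E) [μ.IsAddHaarMeasure]
  [NormedAddCommGroup F] [NormedSpace ℝ F] {Φ : E → E} {Φ' : E → E →L[ℝ] E} {s t : Set E}

lemma lintegral_rpow_enorm_fderiv_comp_le_of_norm_rpow_le_det {p K : ℝ} (hp : 0 < p)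
    (hK : 0 ≤ K) (hs : MeasurableSet s) (hΦ : ∀ x ∈ s, HasFDerivAt Φ (Φ' x) x)
    (hinj : InjOn Φ s) (hst : MapsTo Φ s t) (hdet : ∀ x ∈ s, ‖Φ' x‖ ^ p ≤ K * |(Φ' x).det|)
    {u : E → F} (hu : Differentiable ℝ u) :
    ∫⁻ x in s, ‖fderiv ℝ (u ∘ Φ) x‖ₑ ^ p ∂μ ≤
      ENNReal.ofReal K * ∫⁻ y in t, ‖fderiv ℝ u y‖ₑ ^ p ∂μ := by
  have hpointwise : ∀ x ∈ s, ‖fderiv ℝ (u ∘ Φ) x‖ₑ ^ p ≤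
      ENNReal.ofReal K * (ENNReal.ofReal |(Φ' x).det| * ‖fderiv ℝ u (Φ x)‖ₑ ^ p) := fun x hx =>
    calc ‖fderiv ℝ (u ∘ Φ) x‖ₑ ^ p
        ≤ (‖Φ' x‖ₑ * ‖fderiv ℝ u (Φ x)‖ₑ) ^ p := by
          rw [((hu (Φ x)).hasFDerivAt.comp x (hΦ x hx)).fderiv, mul_comm]
          gcongr
          exact ContinuousLinearMap.opENorm_comp_le _ _
      _ = ENNReal.ofReal (‖Φ' x‖ ^ p) * ‖fderiv ℝ u (Φ x)‖ₑ ^ p := by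
          rw [ENNReal.mul_rpow_of_nonneg _ _ hp.le, ← ofReal_norm (Φ' x),
            ENNReal.ofReal_rpow_of_nonneg (norm_nonneg _) hp.le]
      _ ≤ ENNReal.ofReal (K * |(Φ' x).det|) * ‖fderiv ℝ u (Φ x)‖ₑ ^ p := by
          gcongr
          exact hdet x hx
      _ = _ := by rw [ENNReal.ofReal_mul hK, mul_assoc]
  calc ∫⁻ x in s, ‖fderiv ℝ (u ∘ Φ) x‖ₑ ^ p ∂μ
      ≤ ∫⁻ x in s, ENNReal.ofReal K *
          (ENNReal.ofReal |(Φ' x).det| * ‖fderiv ℝ u (Φ x)‖ₑ ^ p) ∂μ :=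
        setLIntegral_mono' hs hpointwise
    _ = ENNReal.ofReal K * ∫⁻ y in Φ '' s, ‖fderiv ℝ u y‖ₑ ^ p ∂μ := by
        rw [lintegral_const_mul' _ _ ENNReal.ofReal_ne_top,
          lintegral_image_eq_lintegral_abs_det_fderiv_mul μ hs
            (fun x hx => (hΦ x hx).hasFDerivWithinAt) hinj]
    _ ≤ ENNReal.ofReal K * ∫⁻ y in t, ‖fderiv ℝ u y‖ₑ ^ p ∂μ := by
        gcongr
        exact hst.image_subset

lemma eLpNorm_fderiv_comp_le_of_norm_rpow_le_det {p K : ℝ} (hp : 0 < p) (hK : 0 ≤ K)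
    (hs : MeasurableSet s) (hΦ : ∀ x ∈ s, HasFDerivAt Φ (Φ' x) x) (hinj : InjOn Φ s)
    (hst : MapsTo Φ s t) (hdet : ∀ x ∈ s, ‖Φ' x‖ ^ p ≤ K * |(Φ' x).det|)
    {u : E → F} (hu : Differentiable ℝ u) :
    eLpNorm (fderiv ℝ (u ∘ Φ)) (ENNReal.ofReal p) (μ.restrict s) ≤
      ENNReal.ofReal (K ^ (1 / p)) *
        eLpNorm (fderiv ℝ u) (ENNReal.ofReal p) (μ.restrict t) := by
  have hp₀ : ENNReal.ofReal p ≠ 0 := (ENNReal.ofReal_pos.2 hp).ne'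
  rw [eLpNorm_eq_lintegral_rpow_enorm_toReal hp₀ ENNReal.ofReal_ne_top,
    eLpNorm_eq_lintegral_rpow_enorm_toReal hp₀ ENNReal.ofReal_ne_top, ENNReal.toReal_ofReal hp.le,
    ← ENNReal.ofReal_rpow_of_nonneg hK (by positivity),
    ← ENNReal.mul_rpow_of_nonneg _ _ (by positivity)]
  gcongr
  exact lintegral_rpow_enorm_fderiv_comp_le_of_norm_rpow_le_det μ hp hK hs hΦ hinj hst hdet
    hu

end ChangeOfVariables

section RadialInversion

variable {E : Type*} [NormedAddCommGroup E] [InnerProductSpace ℝ E] {b : ℝ} {n : ℕ} {x : E}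

/-- The radial map `x ↦ (b / ‖x‖) ^ n • x`, fixing the sphere of radius `b`. For `n = 2` it is the
inversion in that sphere. At the origin it takes the junk value `0`. -/
def radialInversion (b : ℝ) (n : ℕ) (x : E) : E := (b / ‖x‖) ^ n • x

/-- The Fréchet derivative of `radialInversion b n` at `x ≠ 0`, written through the orthogonal
projection onto the line spanned by `x`. -/
def radialInversionDeriv (b : ℝ) (n : ℕ) (x : E) : E →L[ℝ] E :=
  (b / ‖x‖) ^ n • (ContinuousLinearMap.id ℝ E - (n : ℝ) • (ℝ ∙ x).starProjection)

lemma hasFDerivAt_radialInversion (b : ℝ) (n : ℕ) (hx : x ≠ 0) :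
    HasFDerivAt (radialInversion b n) (radialInversionDeriv b n x) x := by
  have hx' : ‖x‖ ≠ 0 := norm_ne_zero_iff.2 hx
  have hscale : HasDerivAt (fun r : ℝ => (b / r) ^ n) (-n * (b / ‖x‖) ^ n / ‖x‖) ‖x‖ := by
    refine (((hasDerivAt_inv hx').const_mul b).fun_pow n).congr_deriv ?_
    rcases n with _ | n
    · simp
    · rw [Nat.add_sub_cancel, pow_succ (b / ‖x‖)]
      field_simp
  refine ((hscale.comp_hasFDerivAt x (hasFDerivAt_norm hx)).smul (hasFDerivAt_id x)).congr_fderiv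
    (ContinuousLinearMap.ext fun v => ?_)
  simp only [Function.comp_apply, neg_mul, id_eq, add_apply, smul_apply,
    ContinuousLinearMap.id_apply, ContinuousLinearMap.smulRight_apply, coe_innerSL_apply,
    smul_eq_mul, radialInversionDeriv, sub_apply, Submodule.starProjection_singleton, ringHom_apply]
  module

lemma contDiffAt_radialInversion (b : ℝ) (n : ℕ) (hx : x ≠ 0) {k : WithTop ℕ∞} :
    ContDiffAt ℝ k (radialInversion b n) x :=
  ((contDiffAt_const.div (contDiffAt_norm ℝ hx) (norm_ne_zero_iff.2 hx)).pow n).smul contDiffAt_id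

lemma radialInversion_of_norm_eq (hb : b ≠ 0) (n : ℕ) (hx : ‖x‖ = b) :
    radialInversion b n x = x := by
  rw [radialInversion, hx, div_self hb, one_pow, one_smul]

lemma radialInversionDeriv_of_norm_eq (hb : b ≠ 0) (n : ℕ) (hx : ‖x‖ = b) :
    radialInversionDeriv b n x =
      ContinuousLinearMap.id ℝ E - (n : ℝ) • (ℝ ∙ x).starProjection := by
  rw [radialInversionDeriv, hx, div_self hb, one_pow, one_smul]

lemma norm_radialInversion_succ (hb : 0 ≤ b) (n : ℕ) (hx : x ≠ 0) :
    ‖radialInversion b (n + 1) x‖ = b * (b / ‖x‖) ^ n := by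
  rw [radialInversion, norm_smul, Real.norm_of_nonneg (by positivity), pow_succ, mul_assoc,
    div_mul_cancel₀ _ (norm_ne_zero_iff.2 hx), mul_comm]

lemma injOn_radialInversion (hb : 0 < b) (hn : 2 ≤ n) :
    InjOn (radialInversion b n : E → E) {0}ᶜ := by
  obtain ⟨k, rfl⟩ : ∃ k, n = k + 1 := ⟨n - 1, by omega⟩
  intro x hx y hy hxy
  have hx' : 0 < ‖x‖ := norm_pos_iff.2 hx
  have hy' : 0 < ‖y‖ := norm_pos_iff.2 hy
  have hpow : (b / ‖x‖) ^ k = (b / ‖y‖) ^ k := mul_left_cancel₀ hb.ne' <| by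
    rw [← norm_radialInversion_succ hb.le k hx, ← norm_radialInversion_succ hb.le k hy, hxy]
  have hdiv : b / ‖x‖ = b / ‖y‖ :=
    (pow_left_inj₀ (by positivity) (by positivity) (by omega)).1 hpow
  rw [radialInversion, radialInversion, hdiv] at hxy
  exact smul_right_injective E (pow_pos (div_pos hb hy') (k + 1)).ne' hxy

lemma mapsTo_radialInversion (hb : 0 ≤ b) (hn : n ≠ 0) :
    MapsTo (radialInversion b n : E → E) (ball 0 b \ {0}) (ball 0 b)ᶜ := by
  obtain ⟨k, rfl⟩ := Nat.exists_eq_succ_of_ne_zero hn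
  rintro x ⟨hxb, hx⟩
  have hscale : 1 ≤ b / ‖x‖ :=
    (one_le_div (norm_pos_iff.2 hx)).2 (mem_ball_zero_iff.1 hxb).le
  rw [mem_compl_iff, mem_ball_zero_iff, not_lt, norm_radialInversion_succ hb k hx]
  exact le_mul_of_one_le_right hb (one_le_pow₀ hscale)

lemma tendsto_radialInversion_cobounded (hb : 0 < b) (hn : 2 ≤ n) :
    Tendsto (radialInversion b n : E → E) (𝓝[≠] 0) (Bornology.cobounded E) := by
  obtain ⟨k, rfl⟩ : ∃ k, n = k + 1 := ⟨n - 1, by omega⟩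
  have hscale : Tendsto (fun x : E => b / ‖x‖) (𝓝[≠] 0) atTop :=
    tendsto_norm_nhdsNE_zero.inv_tendsto_nhdsGT_zero.const_mul_atTop hb
  rw [← tendsto_norm_atTop_iff_cobounded]
  refine (((tendsto_pow_atTop (by omega : k ≠ 0)).comp hscale).const_mul_atTop hb).congr' ?_
  filter_upwards [self_mem_nhdsWithin] with x hx using (norm_radialInversion_succ hb.le k hx).symm

lemma norm_radialInversionDeriv_le (hb : 0 ≤ b) (hn : 2 ≤ n) (x : E) :
    ‖radialInversionDeriv b n x‖ ≤ (b / ‖x‖) ^ n * (n - 1) := by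
  rw [radialInversionDeriv, norm_smul, Real.norm_of_nonneg (by positivity)]
  gcongr
  exact norm_id_sub_smul_starProjection_le _ (by exact_mod_cast hn)

variable [FiniteDimensional ℝ E]

lemma det_radialInversionDeriv (b : ℝ) (n : ℕ) (hx : x ≠ 0) :
    (radialInversionDeriv b n x).det = ((b / ‖x‖) ^ n) ^ finrank ℝ E * (1 - n) := by
  rw [radialInversionDeriv, ← det_id_sub_smul_starProjection_span_singleton (n : ℝ) hx]
  exact LinearMap.det_smul _ _

lemma norm_radialInversionDeriv_rpow_le {p : ℝ} (hp : 0 ≤ p) (hpE : p ≤ finrank ℝ E) (hn : 2 ≤ n)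
    (hx : x ∈ ball 0 b \ {0}) :
    ‖radialInversionDeriv b n x‖ ^ p ≤
      ((n : ℝ) - 1) ^ (p - 1) * |(radialInversionDeriv b n x).det| := by
  obtain ⟨hxb, hx⟩ := hx
  rw [mem_ball_zero_iff] at hxb
  have hb : 0 ≤ b := (norm_nonneg x).trans hxb.le
  have hn' : (0 : ℝ) < n - 1 := sub_pos.2 (by exact_mod_cast hn)
  have hscale : 1 ≤ (b / ‖x‖) ^ n := one_le_pow₀ ((one_le_div (norm_pos_iff.2 hx)).2 hxb.le)
  calc ‖radialInversionDeriv b n x‖ ^ p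
      ≤ ((b / ‖x‖) ^ n * (n - 1)) ^ p := by
        gcongr
        exact norm_radialInversionDeriv_le hb hn x
    _ = ((b / ‖x‖) ^ n) ^ p * ((n : ℝ) - 1) ^ p := Real.mul_rpow (by positivity) hn'.le
    _ ≤ ((b / ‖x‖) ^ n) ^ (finrank ℝ E : ℝ) * ((n : ℝ) - 1) ^ p := by gcongr
    _ = ((n : ℝ) - 1) ^ (p - 1) * (((b / ‖x‖) ^ n) ^ finrank ℝ E * (n - 1)) := by
        rw [Real.rpow_natCast, Real.rpow_sub_one hn'.ne']
        field_simp
    _ = ((n : ℝ) - 1) ^ (p - 1) * |(radialInversionDeriv b n x).det| := by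
        rw [det_radialInversionDeriv b n hx, abs_mul, abs_of_nonneg (by positivity),
          abs_sub_comm, abs_of_pos hn']

end RadialInversion

section SphereExtension

variable {E F : Type*} [NormedAddCommGroup E] [InnerProductSpace ℝ E]
  [NormedAddCommGroup F] [NormedSpace ℝ F] {b : ℝ} {u : E → F} {x : E}

/-- The higher-order reflection of `u` across the sphere of radius `b`, a combination of pullbacks
by radial inversions chosen to match `u` to first order on the sphere. -/
def sphereReflection (b : ℝ) (u : E → F) : E → F :=
  (3 : ℝ) • (u ∘ radialInversion b 2) - (2 : ℝ) • (u ∘ radialInversion b 3)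

/-- The extension `ũ` of `u` from the exterior of the ball of radius `b`: the reflection of `u`
inside the ball. The value at the origin is set to `0`, the limit there when `u` has compact
support. -/
def sphereExtension (b : ℝ) (u : E → F) (x : E) : F :=
  if b ≤ ‖x‖ then u x else if x = 0 then 0 else sphereReflection b u x

lemma div_pow_eq_mul_rpow_neg (b : ℝ) {r : ℝ} (hr : 0 ≤ r) (n : ℕ) :
    (b / r) ^ n = b ^ n * r ^ (-(n : ℝ)) := by
  rw [div_pow, div_eq_mul_inv, Real.rpow_neg hr, Real.rpow_natCast]

lemma sphereExtension_eq_ite [DecidableEq E] (b : ℝ) (u : E → ℝ) :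
    sphereExtension b u = fun x =>
      if b ≤ ‖x‖ then u x
      else if x = 0 then 0
      else 3 * u ((b ^ 2 * ‖x‖ ^ (-2 : ℝ)) • x) - 2 * u ((b ^ 3 * ‖x‖ ^ (-3 : ℝ)) • x) := by
  funext x
  have hscale (n : ℕ) := div_pow_eq_mul_rpow_neg b (norm_nonneg x) n
  have hreflection : sphereReflection b u x =
      3 * u ((b ^ 2 * ‖x‖ ^ (-2 : ℝ)) • x) - 2 * u ((b ^ 3 * ‖x‖ ^ (-3 : ℝ)) • x) := by
    simp [sphereReflection, radialInversion, hscale]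
  rw [sphereExtension, hreflection]
  congr

lemma contDiffOn_comp_radialInversion (b : ℝ) (n : ℕ) (hu : ContDiff ℝ 1 u) :
    ContDiffOn ℝ 1 (u ∘ radialInversion b n) {0}ᶜ := fun x hx =>
  (hu.contDiffAt.comp x (contDiffAt_radialInversion b n hx)).contDiffWithinAt

lemma differentiableAt_comp_radialInversion (b : ℝ) (n : ℕ) (hu : Differentiable ℝ u)
    (hx : x ≠ 0) : DifferentiableAt ℝ (u ∘ radialInversion b n) x :=
  (hu _).comp x (hasFDerivAt_radialInversion b n hx).differentiableAt

lemma fderiv_sphereReflection (b : ℝ) (hu : Differentiable ℝ u) (hx : x ≠ 0) :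
    fderiv ℝ (sphereReflection b u) x =
      (3 : ℝ) • fderiv ℝ (u ∘ radialInversion b 2) x -
        (2 : ℝ) • fderiv ℝ (u ∘ radialInversion b 3) x :=
  (((differentiableAt_comp_radialInversion b 2 hu hx).hasFDerivAt.const_smul 3).sub
    ((differentiableAt_comp_radialInversion b 3 hu hx).hasFDerivAt.const_smul 2)).fderiv

lemma contDiffOn_sphereReflection (b : ℝ) (hu : ContDiff ℝ 1 u) :
    ContDiffOn ℝ 1 (sphereReflection b u) {0}ᶜ :=
  ((contDiffOn_comp_radialInversion b 2 hu).const_smul 3).sub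
    ((contDiffOn_comp_radialInversion b 3 hu).const_smul 2)

lemma sphereReflection_of_norm_eq (hb : b ≠ 0) (hx : ‖x‖ = b) : sphereReflection b u x = u x := by
  simp only [sphereReflection, Pi.sub_apply, Pi.smul_apply, Function.comp_apply,
    radialInversion_of_norm_eq hb _ hx]
  module

lemma fderiv_sphereReflection_of_norm_eq (hb : b ≠ 0) (hu : Differentiable ℝ u) (hx : ‖x‖ = b) :
    fderiv ℝ (sphereReflection b u) x = fderiv ℝ u x := by
  have hx₀ : x ≠ 0 := norm_ne_zero_iff.1 (hx.trans_ne hb)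
  have hcomp (n : ℕ) : fderiv ℝ (u ∘ radialInversion b n) x =
      (fderiv ℝ u x).comp (ContinuousLinearMap.id ℝ E - (n : ℝ) • (ℝ ∙ x).starProjection) := by
    rw [fderiv_comp x (hu _) (hasFDerivAt_radialInversion b n hx₀).differentiableAt,
      (hasFDerivAt_radialInversion b n hx₀).fderiv, radialInversion_of_norm_eq hb n hx,
      radialInversionDeriv_of_norm_eq hb n hx]
  rw [fderiv_sphereReflection b hu hx₀, hcomp, hcomp]
  ext v
  simp only [sub_apply, smul_apply, ContinuousLinearMap.comp_apply, ContinuousLinearMap.id_apply,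
    map_sub, map_smul]
  push_cast
  module

lemma sphereExtension_of_le_norm (hx : b ≤ ‖x‖) : sphereExtension b u x = u x := if_pos hx

lemma sphereExtension_eqOn_piecewise (b : ℝ) (u : E → F) :
    EqOn (sphereExtension b u) ((ball 0 b).piecewise (sphereReflection b u) u) {0}ᶜ := by
  intro x hx
  by_cases hxb : b ≤ ‖x‖
  · rw [sphereExtension_of_le_norm hxb, piecewise_eq_of_notMem _ _ _ (by simpa using hxb)]
  · rw [sphereExtension, if_neg hxb, if_neg (show x ≠ 0 from hx),
      piecewise_eq_of_mem _ _ _ (by simpa using hxb)]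

lemma sphereReflection_eq_to_first_order (hb : b ≠ 0) (hu : Differentiable ℝ u)
    (hx : x ∈ frontier (ball (0 : E) b)) :
    sphereReflection b u x = u x ∧ fderiv ℝ (sphereReflection b u) x = fderiv ℝ u x :=
  have hxb : ‖x‖ = b := mem_sphere_zero_iff_norm.1 (frontier_ball_subset_sphere hx)
  ⟨sphereReflection_of_norm_eq hb hxb, fderiv_sphereReflection_of_norm_eq hb hu hxb⟩

lemma contDiffOn_sphereExtension (hb : b ≠ 0) (hu : ContDiff ℝ 1 u) :
    ContDiffOn ℝ 1 (sphereExtension b u) {0}ᶜ :=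
  (contDiffOn_one_piecewise isOpen_compl_singleton (contDiffOn_sphereReflection b hu)
    hu.contDiffOn fun _ hx =>
      sphereReflection_eq_to_first_order hb (hu.differentiable one_ne_zero) hx.2).congr
    (sphereExtension_eqOn_piecewise b u)

lemma fderiv_sphereExtension (hb : b ≠ 0) (hu : ContDiff ℝ 1 u) (hx : x ≠ 0) :
    fderiv ℝ (sphereExtension b u) x =
      (ball 0 b).piecewise (fderiv ℝ (sphereReflection b u)) (fderiv ℝ u) x := by
  have hx_nhds : ({0}ᶜ : Set E) ∈ 𝓝 x := isOpen_compl_singleton.mem_nhds hx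
  have hu' : Differentiable ℝ u := hu.differentiable one_ne_zero
  rw [((sphereExtension_eqOn_piecewise b u).eventuallyEq_of_mem hx_nhds).fderiv_eq]
  exact (hasFDerivAt_piecewise
    ((contDiffOn_sphereReflection b hu).contDiffAt hx_nhds |>.differentiableAt one_ne_zero)
    (hu' x) (sphereReflection_eq_to_first_order hb hu')).fderiv

lemma hasCompactSupport_sphereExtension [ProperSpace E] (b : ℝ) (husupp : HasCompactSupport u) :
    HasCompactSupport (sphereExtension b u) := by
  refine HasCompactSupport.intro ((isCompact_closedBall 0 b).union husupp.isCompact) fun x hx => ?_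
  simp only [mem_union, mem_closedBall_zero_iff, not_or, not_le] at hx
  rw [sphereExtension_of_le_norm hx.1.le, image_eq_zero_of_notMem_tsupport hx.2]

lemma sphereExtension_eventuallyEq_zero [ProperSpace E] (hb : 0 < b)
    (husupp : HasCompactSupport u) : sphereExtension b u =ᶠ[𝓝 0] 0 := by
  have hinfty : ∀ᶠ y in Bornology.cobounded E, u y = 0 := by
    rw [Metric.cobounded_eq_cocompact, ← coclosedCompact_eq_cocompact]
    exact hasCompactSupport_iff_eventuallyEq.1 husupp
  have hcomp {n : ℕ} (hn : 2 ≤ n) : ∀ᶠ x in 𝓝[≠] (0 : E), u (radialInversion b n x) = 0 :=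
    (tendsto_radialInversion_cobounded hb hn).eventually hinfty
  have hpunctured : ∀ᶠ x in 𝓝[≠] (0 : E), sphereExtension b u x = 0 := by
    filter_upwards [hcomp le_rfl, hcomp (Nat.le_succ 2), self_mem_nhdsWithin,
      nhdsWithin_le_nhds (ball_mem_nhds 0 hb)] with x h₂ h₃ hx hxb
    rw [sphereExtension_eqOn_piecewise b u hx, piecewise_eq_of_mem _ _ _ hxb]
    simp [sphereReflection, h₂, h₃]
  filter_upwards [eventually_nhdsWithin_iff.1 hpunctured] with x hx
  by_cases hx₀ : x = 0
  · simp [sphereExtension, hx₀, hb]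
  · exact hx hx₀

lemma contDiff_sphereExtension [ProperSpace E] (hb : 0 < b) (hu : ContDiff ℝ 1 u)
    (husupp : HasCompactSupport u) : ContDiff ℝ 1 (sphereExtension b u) := by
  refine contDiff_iff_contDiffAt.2 fun x => ?_
  by_cases hx : x = 0
  · subst hx
    exact contDiffAt_const.congr_of_eventuallyEq (sphereExtension_eventuallyEq_zero hb husupp)
  · exact (contDiffOn_sphereExtension hb.ne' hu).contDiffAt (isOpen_compl_singleton.mem_nhds hx)

section Energy

variable [FiniteDimensional ℝ E] [MeasurableSpace E] [BorelSpace E] (μ : Measure E)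

lemma aestronglyMeasurable_fderiv_comp_radialInversion (n : ℕ) (hu : ContDiff ℝ 1 u) :
    AEStronglyMeasurable (fderiv ℝ (u ∘ radialInversion b n)) (μ.restrict (ball 0 b \ {0})) :=
  (((contDiffOn_comp_radialInversion b n hu).continuousOn_fderiv_of_isOpen
    isOpen_compl_singleton le_rfl).mono fun _ hx => hx.2).aestronglyMeasurable
    (measurableSet_ball.diff (measurableSet_singleton 0))

variable [μ.IsAddHaarMeasure] {p : ℝ}

lemma restrict_ball_diff_singleton_zero [Nontrivial E] (b : ℝ) :
    μ.restrict (ball 0 b \ {0}) = μ.restrict (ball 0 b) :=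
  Measure.restrict_congr_set (sdiff_null_ae_eq_self (measure_singleton 0))

lemma eLpNorm_fderiv_comp_radialInversion_le {n : ℕ} (hn : 2 ≤ n) (hp : 0 < p)
    (hpE : p ≤ finrank ℝ E) (hb : 0 < b) (hu : Differentiable ℝ u) :
    eLpNorm (fderiv ℝ (u ∘ radialInversion b n)) (ENNReal.ofReal p)
        (μ.restrict (ball 0 b \ {0})) ≤
      ENNReal.ofReal (((n : ℝ) - 1) ^ (1 - 1 / p)) *
        eLpNorm (fderiv ℝ u) (ENNReal.ofReal p) (μ.restrict (ball 0 b)ᶜ) := by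
  have hn' : (0 : ℝ) ≤ n - 1 := sub_nonneg.2 (by exact_mod_cast one_le_two.trans hn)
  have hexp : (((n : ℝ) - 1) ^ (p - 1)) ^ (1 / p) = ((n : ℝ) - 1) ^ (1 - 1 / p) := by
    rw [← Real.rpow_mul hn', sub_mul, one_mul, mul_one_div_cancel hp.ne']
  rw [← hexp]
  exact eLpNorm_fderiv_comp_le_of_norm_rpow_le_det μ hp (Real.rpow_nonneg hn' _)
    (measurableSet_ball.diff (measurableSet_singleton 0))
    (fun x hx => hasFDerivAt_radialInversion b n hx.2)
    ((injOn_radialInversion hb hn).mono fun x hx => hx.2)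
    (mapsTo_radialInversion hb.le (by omega))
    (fun x hx => norm_radialInversionDeriv_rpow_le hp.le hpE hn hx) hu

lemma eLpNorm_fderiv_sphereReflection_le (hp : 1 ≤ p) (hpE : p ≤ finrank ℝ E) (hb : 0 < b)
    (hu : ContDiff ℝ 1 u) :
    eLpNorm (fderiv ℝ (sphereReflection b u)) (ENNReal.ofReal p)
        (μ.restrict (ball 0 b \ {0})) ≤
      ENNReal.ofReal (3 + 2 ^ (2 - 1 / p)) *
        eLpNorm (fderiv ℝ u) (ENNReal.ofReal p) (μ.restrict (ball 0 b)ᶜ) := by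
  set q := ENNReal.ofReal p
  set ν := μ.restrict (ball 0 b \ {0})
  set N := eLpNorm (fderiv ℝ u) q (μ.restrict (ball 0 b)ᶜ)
  have hp₀ : 0 < p := one_pos.trans_le hp
  have hu' : Differentiable ℝ u := hu.differentiable one_ne_zero
  have hderiv : fderiv ℝ (sphereReflection b u) =ᵐ[ν]
      (3 : ℝ) • fderiv ℝ (u ∘ radialInversion b 2) -
        (2 : ℝ) • fderiv ℝ (u ∘ radialInversion b 3) := by
    filter_upwards [ae_restrict_mem (measurableSet_ball.diff (measurableSet_singleton 0))]
      with x hx using fderiv_sphereReflection b hu' hx.2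
  have h₂ : eLpNorm (fderiv ℝ (u ∘ radialInversion b 2)) q ν ≤ N := by
    convert eLpNorm_fderiv_comp_radialInversion_le μ le_rfl hp₀ hpE hb hu' using 1
    norm_num [N, q]
  have h₃ : eLpNorm (fderiv ℝ (u ∘ radialInversion b 3)) q ν ≤
      ENNReal.ofReal (2 ^ (1 - 1 / p)) * N := by
    convert eLpNorm_fderiv_comp_radialInversion_le μ (Nat.le_succ 2) hp₀ hpE hb hu' using 4
    norm_num
  calc eLpNorm (fderiv ℝ (sphereReflection b u)) q ν
      ≤ ‖(3 : ℝ)‖ₑ * eLpNorm (fderiv ℝ (u ∘ radialInversion b 2)) q ν +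
          ‖(2 : ℝ)‖ₑ * eLpNorm (fderiv ℝ (u ∘ radialInversion b 3)) q ν :=
        (eLpNorm_congr_ae hderiv).trans_le <|
          eLpNorm_smul_sub_smul_le (ENNReal.one_le_ofReal.2 hp)
            (aestronglyMeasurable_fderiv_comp_radialInversion μ 2 hu)
            (aestronglyMeasurable_fderiv_comp_radialInversion μ 3 hu) 3 2
    _ ≤ ENNReal.ofReal 3 * N + ENNReal.ofReal 2 * (ENNReal.ofReal (2 ^ (1 - 1 / p)) * N) := by
        rw [Real.enorm_of_nonneg zero_le_three, Real.enorm_of_nonneg zero_le_two]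
        gcongr
    _ = ENNReal.ofReal (3 + 2 * 2 ^ (1 - 1 / p)) * N := by
        rw [← mul_assoc, ← ENNReal.ofReal_mul zero_le_two, ← add_mul,
          ← ENNReal.ofReal_add zero_le_three (by positivity)]
    _ = ENNReal.ofReal (3 + 2 ^ (2 - 1 / p)) * N := by
        rw [show 2 - 1 / p = 1 + (1 - 1 / p) by ring, Real.rpow_add two_pos, Real.rpow_one]

lemma eLpNorm_fderiv_sphereExtension_le (hp : 1 ≤ p) (hpE : p ≤ finrank ℝ E) (hb : 0 < b)
    (hu : ContDiff ℝ 1 u) (husupp : HasCompactSupport u) :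
    eLpNorm (fderiv ℝ (sphereExtension b u)) (ENNReal.ofReal p) μ ≤
      ENNReal.ofReal (4 + 2 ^ (2 - 1 / p)) *
        eLpNorm (fderiv ℝ u) (ENNReal.ofReal p) (μ.restrict (ball 0 b)ᶜ) := by
  set q := ENNReal.ofReal p
  set N := eLpNorm (fderiv ℝ u) q (μ.restrict (ball 0 b)ᶜ)
  have : Nontrivial E := Module.nontrivial_of_finrank_pos (R := ℝ)
    (Nat.cast_pos.1 (one_pos.trans_le (hp.trans hpE)))
  have hball : eLpNorm (fderiv ℝ (sphereExtension b u)) q (μ.restrict (ball 0 b)) ≤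
      ENNReal.ofReal (3 + 2 ^ (2 - 1 / p)) * N := by
    rw [← restrict_ball_diff_singleton_zero]
    refine (eLpNorm_congr_ae ?_).trans_le (eLpNorm_fderiv_sphereReflection_le μ hp hpE hb hu)
    filter_upwards [ae_restrict_mem (measurableSet_ball.diff (measurableSet_singleton 0))]
      with x hx
    rw [fderiv_sphereExtension hb.ne' hu hx.2, piecewise_eq_of_mem _ _ _ hx.1]
  have hcompl : eLpNorm (fderiv ℝ (sphereExtension b u)) q (μ.restrict (ball 0 b)ᶜ) = N := by
    refine eLpNorm_congr_ae ?_
    filter_upwards [ae_restrict_mem measurableSet_ball.compl] with x hx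
    have hx₀ : x ≠ 0 := fun h => hx (h ▸ mem_ball_self hb)
    rw [fderiv_sphereExtension hb.ne' hu hx₀, piecewise_eq_of_notMem _ _ _ hx]
  calc eLpNorm (fderiv ℝ (sphereExtension b u)) q μ
      ≤ eLpNorm (fderiv ℝ (sphereExtension b u)) q (μ.restrict (ball 0 b)) +
          eLpNorm (fderiv ℝ (sphereExtension b u)) q (μ.restrict (ball 0 b)ᶜ) :=
        eLpNorm_le_add_restrict_compl (ENNReal.one_le_ofReal.2 hp) measurableSet_ball
          ((contDiff_sphereExtension hb hu husupp).continuous_fderiv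
            one_ne_zero).aestronglyMeasurable
    _ ≤ ENNReal.ofReal (3 + 2 ^ (2 - 1 / p)) * N + N := by
        rw [hcompl]
        gcongr
    _ = ENNReal.ofReal (4 + 2 ^ (2 - 1 / p)) * N := by
        rw [show (4 : ℝ) + 2 ^ (2 - 1 / p) = 3 + 2 ^ (2 - 1 / p) + 1 by ring,
          ENNReal.ofReal_add (by positivity) zero_le_one, ENNReal.ofReal_one, add_mul, one_mul]

theorem extension_estimate_general (hp : 1 ≤ p) (hpE : p ≤ finrank ℝ E) (hb : 0 < b)
    (hu : ContDiff ℝ 1 u) (husupp : HasCompactSupport u) :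
    ContDiff ℝ 1 (sphereExtension b u) ∧ HasCompactSupport (sphereExtension b u) ∧
      (∀ x ∈ (ball 0 b)ᶜ, sphereExtension b u x = u x) ∧
      (∫ x, ‖fderiv ℝ (sphereExtension b u) x‖ ^ p ∂μ) ^ (1 / p) ≤
        (4 + 2 ^ (2 - 1 / p)) * (∫ x in (ball 0 b)ᶜ, ‖fderiv ℝ u x‖ ^ p ∂μ) ^ (1 / p) := by
  have hext : ContDiff ℝ 1 (sphereExtension b u) := contDiff_sphereExtension hb hu husupp
  have hmemLp : MemLp (fderiv ℝ u) (ENNReal.ofReal p) μ :=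
    (hu.continuous_fderiv one_ne_zero).memLp_of_hasCompactSupport (husupp.fderiv ℝ)
  exact ⟨hext, hasCompactSupport_sphereExtension b husupp,
    fun x hx => sphereExtension_of_le_norm (by simpa using hx),
    integral_rpow_norm_le_of_eLpNorm_le (one_pos.trans_le hp) (by positivity)
      (hext.continuous_fderiv one_ne_zero).aestronglyMeasurable (hmemLp.restrict _)
      (eLpNorm_fderiv_sphereExtension_le μ hp hpE hb hu husupp)⟩

end Energy

end SphereExtension

lemma four_add_two_rpow_two_sub_half : (4 : ℝ) + 2 ^ (2 - 1 / 2 : ℝ) = 2 * (2 + √2) := by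
  rw [show (2 - 1 / 2 : ℝ) = 1 + 1 / 2 by norm_num, Real.rpow_add two_pos, Real.rpow_one,
    ← Real.sqrt_eq_rpow]
  ring

/-- **Extension estimate** (from the proof of the Appendix theorem):
for `b > 0` and `u : ℝ³ → ℝ` of class `C¹` with compact support, the extension
`ũ(x) = u(x)` for `|x| ≥ b`, `ũ(x) = 3u(b² x/|x|²) - 2u(b³ x/|x|³)` for `0 < |x| < b`,
`ũ(0) = 0`, is `C¹` with compact support, agrees with `u` on `M = ℝ³ \ B(0,b)`, and
satisfies `‖∇ũ‖_{L²(ℝ³)} ≤ 2(2+√2) ‖∇u‖_{L²(M)}`. -/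
theorem extension_estimate
    (b : ℝ) (hb : 0 < b)
    (u : E3 → ℝ) (hu : ContDiff ℝ 1 u) (husupp : HasCompactSupport u) :
    let M : Set E3 := (ball (0 : E3) b)ᶜ
    let ut : E3 → ℝ := fun x =>
      if b ≤ ‖x‖ then u x
      else if x = 0 then 0
      else 3 * u ((b ^ 2 * ‖x‖ ^ (-2 : ℝ)) • x) - 2 * u ((b ^ 3 * ‖x‖ ^ (-3 : ℝ)) • x)
    ContDiff ℝ 1 ut ∧ HasCompactSupport ut ∧ (∀ x ∈ M, ut x = u x) ∧
      (∫ x, ‖fderiv ℝ ut x‖ ^ (2 : ℝ)) ^ ((1 : ℝ) / 2) ≤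
        2 * (2 + Real.sqrt 2) * (∫ x in M, ‖fderiv ℝ u x‖ ^ (2 : ℝ)) ^ ((1 : ℝ) / 2) := by
  simpa only [sphereExtension_eq_ite, four_add_two_rpow_two_sub_half] using
    extension_estimate_general volume one_le_two (by norm_num) hb hu husupp
end
end
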